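/- arXiv:1402.6194 — 3 statements merged into one kernel-verified Lean document; each statement's English description precedes it below -/
import Mathlib

section
/- Let ε > 0 and n, m ∈ ℕ. The harmonic Moyal eigenfunction Ψ^ε_{nm} = W^ε[ψ_n^ε, ψ_m^ε] is a smooth function on ℝ² and satisfies, pointwise, the eigenvalue equation of the harmonic quantum Liouville operator: k ∂_x Ψ^ε_{nm}(x,k) − x ∂_k Ψ^ε_{nm}(x,k) = i (n − m) Ψ^ε_{nm}(x,k). -/
open MeasureTheory

/-- The ε-scaled cross-Wigner transform of `f` and `g`. -/
noncomputable def crossWigner (ε : ℝ) (f g : ℝ → ℂ) : ℝ × ℝ → ℂ := fun p =>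
  ((1 / (2 * Real.pi * ε) : ℝ) : ℂ) *
    ∫ ξ : ℝ, Complex.exp (-(Complex.I * p.2 * ξ) / ε) * f (p.1 + ξ / 2) *
      (starRingEnd ℂ) (g (p.1 - ξ / 2))

/-- The physicists' Hermite polynomials: `H_0 = 1`, `H_{n+1} = 2x H_n - H_n'`. -/
noncomputable def hermiteP : ℕ → Polynomial ℝ
  | 0 => 1
  | n + 1 => Polynomial.C 2 * Polynomial.X * hermiteP n - Polynomial.derivative (hermiteP n)

/-- Hermite function `ψ_n(x) = (2^n n! √π)^{-1/2} e^{-x²/2} H_n(x)`. -/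
noncomputable def hermiteFun (n : ℕ) : ℝ → ℂ := fun x =>
  (((2 ^ n * (n.factorial : ℝ) * Real.sqrt Real.pi) ^ (-(1 / 2 : ℝ)) *
    Real.exp (-x ^ 2 / 2) * (hermiteP n).eval x : ℝ) : ℂ)

/-- Semiclassically rescaled Hermite function `ψ_n^ε(x) = ε^{-1/4} ψ_n(x/√ε)`. -/
noncomputable def hermiteScaled (ε : ℝ) (n : ℕ) : ℝ → ℂ := fun x =>
  ((ε ^ (-(1 / 4 : ℝ)) : ℝ) : ℂ) * hermiteFun n (x / Real.sqrt ε)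

/-!
Write `Q` for multiplication by the coordinate, `P = -iε ∂` and `H = (P² + Q²) / 2`. Under
`W = W^ε[f, g]`, phase-space operations on `W` become operations on `f` and `g` (Bopp shifts):

* `ε ∂ₓ W = i (W[P f, g] - W[f, P g])`, by differentiating under the integral sign;
* `ε ∂ₖ W = -i (W[Q f, g] - W[f, Q g])`, as `ξ` is the difference of the points `x ± ξ / 2`;
* `x W = (W[Q f, g] + W[f, Q g]) / 2`, as `x` is their midpoint;
* `k W = (W[P f, g] + W[f, P g]) / 2`, by integrating by parts in `ξ`.

The first two show that the transforms of pairs of Schwartz functions are closed under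
differentiation, hence smooth. In `ε (k ∂ₓ - x ∂ₖ) W` the mixed terms cancel, which leaves
`i (W[H f, g] - W[f, H g])`, and the Hermite functions are eigenfunctions of `H` because
`Q - i P` raises the energy of the Gaussian ground state by `ε` at each step.
-/

namespace HarmonicMoyal

open SchwartzMap Polynomial Complex
open scoped ComplexConjugate

section SchwartzOperators

/-- The position operator `f ↦ x f` on Schwartz functions. -/
noncomputable def position : 𝓢(ℝ, ℂ) →L[ℂ] 𝓢(ℝ, ℂ) :=
  smulLeftCLM ℂ (fun x : ℝ ↦ (x : ℂ))

/-- The semiclassical momentum operator `f ↦ -iε ∂f` on Schwartz functions. -/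
noncomputable def momentum (ε : ℝ) : 𝓢(ℝ, ℂ) →L[ℂ] 𝓢(ℝ, ℂ) :=
  (-(I * ε)) • derivCLM ℂ ℂ

/-- The harmonic oscillator Hamiltonian `-(ε²/2) ∂² + x²/2` on Schwartz functions, written as
`(P² + Q²) / 2` in terms of momentum and position. -/
noncomputable def oscillator (ε : ℝ) : 𝓢(ℝ, ℂ) →L[ℂ] 𝓢(ℝ, ℂ) :=
  (1 / 2 : ℂ) • (momentum ε ^ 2 + position ^ 2)

/-- The unnormalised creation operator `Q - iP = x - ε ∂` of the oscillator. -/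
noncomputable def creation (ε : ℝ) : 𝓢(ℝ, ℂ) →L[ℂ] 𝓢(ℝ, ℂ) :=
  position - I • momentum ε

theorem position_apply (f : 𝓢(ℝ, ℂ)) (x : ℝ) : position f x = x * f x :=
  smulLeftCLM_apply_apply (by fun_prop) f x

theorem momentum_apply_of_hasDerivAt (ε : ℝ) {f : 𝓢(ℝ, ℂ)} {f' : ℂ} {x : ℝ}
    (h : HasDerivAt f f' x) : momentum ε f x = -(I * ε) * f' :=
  congrArg (-(I * ε) * ·) h.deriv

theorem hasDerivAt_momentum {ε : ℝ} (hε : ε ≠ 0) (f : 𝓢(ℝ, ℂ)) (x : ℝ) :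
    HasDerivAt f (I / ε * momentum ε f x) x := by
  refine (f.hasDerivAt x).congr_deriv ?_
  have hεC : (ε : ℂ) ≠ 0 := mod_cast hε
  rw [momentum_apply_of_hasDerivAt ε (f.hasDerivAt x)]
  field_simp
  rw [I_sq]
  ring

theorem momentum_position (ε : ℝ) (f : 𝓢(ℝ, ℂ)) :
    momentum ε (position f) = position (momentum ε f) - (I * ε) • f := by
  ext x
  have h : HasDerivAt (position f) (1 * f x + x * deriv f x) x :=
    (ofRealCLM.hasDerivAt.mul (f.hasDerivAt x)).congr_of_eventuallyEq
      (.of_forall (position_apply f))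
  rw [momentum_apply_of_hasDerivAt ε h, sub_apply, smul_apply, smul_eq_mul, position_apply,
    momentum_apply_of_hasDerivAt ε (f.hasDerivAt x)]
  ring

theorem oscillator_apply (ε : ℝ) (f : 𝓢(ℝ, ℂ)) :
    oscillator ε f = (1 / 2 : ℂ) • (momentum ε (momentum ε f) + position (position f)) := by
  simp only [oscillator, pow_two, smul_apply, add_apply, mul_apply_eq_comp]

theorem creation_apply (ε : ℝ) (f : 𝓢(ℝ, ℂ)) :
    creation ε f = position f - I • momentum ε f := by
  simp only [creation, sub_apply, smul_apply]

theorem oscillator_creation (ε : ℝ) (f : 𝓢(ℝ, ℂ)) :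
    oscillator ε (creation ε f) = creation ε (oscillator ε f) + (ε : ℂ) • creation ε f := by
  simp only [oscillator_apply, creation_apply, map_sub, map_add, map_smul, momentum_position]
  match_scalars <;> grind [I_sq]

theorem oscillator_creation_pow {ε : ℝ} {E : ℂ} {f : 𝓢(ℝ, ℂ)} (hf : oscillator ε f = E • f)
    (n : ℕ) : oscillator ε ((creation ε ^ n) f) = (E + n * ε) • (creation ε ^ n) f := by
  induction n with
  | zero => simpa using hf
  | succ n ih =>
    rw [pow_succ', mul_apply_eq_comp, oscillator_creation, ih, map_smul]
    push_cast
    module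

end SchwartzOperators

section Gaussian

theorem exists_abs_eval_mul_exp_neg_mul_sq_le {b : ℝ} (hb : 0 < b) (p : ℝ[X]) :
    ∃ C, ∀ x, |p.eval x| * Real.exp (-b * x ^ 2) ≤ C := by
  induction p using Polynomial.induction_on' with
  | add p q hp hq =>
    obtain ⟨C, hC⟩ := hp
    obtain ⟨D, hD⟩ := hq
    refine ⟨C + D, fun x ↦ (add_le_add (hC x) (hD x)).trans' ?_⟩
    rw [eval_add, ← add_mul]
    gcongr
    exact abs_add_le _ _
  | monomial k a =>
    have hlim := tendsto_rpow_abs_mul_exp_neg_mul_sq_cocompact hb k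
    simp only [Real.rpow_natCast] at hlim
    obtain ⟨C, hC⟩ := ((Continuous.isBounded_range_iff_isBigO (by fun_prop)).2
      (hlim.isBigO_one ℝ)).exists_norm_le
    refine ⟨|a| * C, fun x ↦ ?_⟩
    rw [eval_monomial, abs_mul, abs_pow, mul_assoc]
    gcongr
    exact (Real.le_norm_self _).trans (hC _ ⟨x, rfl⟩)

/-- The standard Gaussian `x ↦ e^{-x²/2}` as a Schwartz function. -/
noncomputable def standardGaussian : 𝓢(ℝ, ℝ) where
  toFun x := Real.exp (-(x ^ 2 / 2))
  smooth' := by fun_prop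
  decay' k n := by
    obtain ⟨C, hC⟩ := exists_abs_eval_mul_exp_neg_mul_sq_le one_half_pos
      (X ^ k * (hermite n).map (Int.castRingHom ℝ))
    refine ⟨C, fun x ↦ (hC x).trans_eq' ?_⟩
    rw [norm_iteratedFDeriv_eq_norm_iteratedDeriv, iteratedDeriv_eq_iterate,
      deriv_gaussian_eq_hermite_mul_gaussian]
    simp [eval_map, aeval_def, ← mul_assoc, div_eq_inv_mul]

/-- The Gaussian `x ↦ e^{-x²/(2ε)}` of variance `ε` as a complex-valued Schwartz function: the
unnormalised ground state of the oscillator. -/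
noncomputable def gaussian (ε : ℝ) (hε : 0 < ε) : 𝓢(ℝ, ℂ) :=
  postcompCLM ofRealCLM (compCLMOfContinuousLinearEquiv ℝ
    (ContinuousLinearEquiv.unitsEquivAut ℝ (Units.mk0 (√ε)⁻¹ (by positivity))) standardGaussian)

variable {ε : ℝ} (hε : 0 < ε)

theorem gaussian_apply (x : ℝ) : gaussian ε hε x = cexp (-(x / √ε : ℝ) ^ 2 / 2) := by
  change ((Real.exp (-((x * (√ε)⁻¹) ^ 2 / 2)) : ℝ) : ℂ) = _
  push_cast
  ring_nf

theorem hasDerivAt_gaussian (x : ℝ) :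
    HasDerivAt (gaussian ε hε) (-(x / ε) * gaussian ε hε x) x := by
  have hsq : (√ε : ℂ) ^ 2 = ε := mod_cast Real.sq_sqrt hε.le
  have hexp : HasDerivAt (fun y : ℝ ↦ cexp (-(y / √ε) ^ 2 / 2))
     (cexp (-(x / √ε) ^ 2 / 2) * (-(2 * (x / √ε) * (1 / √ε)) / 2)) x := by
    simpa using ((((ofRealCLM.hasDerivAt (x := x)).div_const (√ε : ℂ)).pow 2).neg.div_const 2).cexp
  refine (hexp.congr_of_eventuallyEq (.of_forall fun y ↦ ?_)).congr_deriv ?_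
  · rw [gaussian_apply, ofReal_div]
  · rw [gaussian_apply, ofReal_div, ← hsq]
    field_simp

theorem momentum_gaussian : momentum ε (gaussian ε hε) = I • position (gaussian ε hε) := by
  ext x
  have hεC : (ε : ℂ) ≠ 0 := mod_cast hε.ne'
  rw [momentum_apply_of_hasDerivAt ε (hasDerivAt_gaussian hε x), smul_apply, smul_eq_mul,
    position_apply]
  field_simp

theorem oscillator_gaussian :
    oscillator ε (gaussian ε hε) = (ε / 2 : ℂ) • gaussian ε hε := by
  simp only [oscillator_apply, momentum_gaussian, map_smul, momentum_position]
  match_scalars <;> grind [I_sq]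

end Gaussian

section Hermite

variable {ε : ℝ}

theorem creation_pow_gaussian_apply (hε : 0 < ε) (n : ℕ) (x : ℝ) :
    (creation ε ^ n) (gaussian ε hε) x =
      √ε ^ n * ((hermiteP n).eval (x / √ε) : ℝ) * gaussian ε hε x := by
  induction n generalizing x with
  | zero => simp [hermiteP]
  | succ n ih =>
    have hs : (√ε : ℂ) ≠ 0 := mod_cast (Real.sqrt_pos.2 hε).ne'
    have hsq : (√ε : ℂ) ^ 2 = ε := mod_cast Real.sq_sqrt hε.le
    have hpoly : HasDerivAt (fun y : ℝ ↦ (((hermiteP n).eval (y / √ε) : ℝ) : ℂ))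
        (((hermiteP n).derivative.eval (x / √ε) * (1 / √ε) : ℝ) : ℂ) x :=
      (((hermiteP n).hasDerivAt (x / √ε)).comp (h := (· / √ε)) x
        ((hasDerivAt_id' x).div_const √ε)).ofReal_comp
    have hderiv := ((hpoly.const_mul ((√ε : ℂ) ^ n)).mul
      (hasDerivAt_gaussian hε x)).congr_of_eventuallyEq (.of_forall ih)
    rw [pow_succ', mul_apply_eq_comp, creation_apply, sub_apply, smul_apply, smul_eq_mul,
      position_apply, momentum_apply_of_hasDerivAt ε hderiv, ih]
    simp only [hermiteP, eval_sub, eval_mul, eval_C, eval_X]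
    push_cast
    rw [← hsq]
    field_simp
    rw [I_sq]
    ring

theorem exists_schwartzMap_eq_hermiteScaled (hε : 0 < ε) (n : ℕ) :
    ∃ f : 𝓢(ℝ, ℂ), ⇑f = hermiteScaled ε n ∧ oscillator ε f = ((ε * (n + 1 / 2) : ℝ) : ℂ) • f := by
  set c : ℝ := ε ^ (-(1 / 4 : ℝ)) * (2 ^ n * n.factorial * √Real.pi) ^ (-(1 / 2 : ℝ))
  have hs : (√ε : ℂ) ≠ 0 := mod_cast (Real.sqrt_pos.2 hε).ne'
  refine ⟨(c / √ε ^ n : ℂ) • (creation ε ^ n) (gaussian ε hε), ?_, ?_⟩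
  · ext x
    rw [smul_apply, smul_eq_mul, creation_pow_gaussian_apply, gaussian_apply]
    simp only [hermiteScaled, hermiteFun, c]
    push_cast
    field_simp
  · rw [map_smul, oscillator_creation_pow (oscillator_gaussian hε)]
    match_scalars
    ring

end Hermite

section CrossWigner

/-- The integrand of `crossWigner`, without the prefactor `1 / (2πε)`. -/
noncomputable def wignerIntegrand (ε : ℝ) (f g : ℝ → ℂ) (p : ℝ × ℝ) (ξ : ℝ) : ℂ :=
  cexp (-(I * p.2 * ξ) / ε) * f (p.1 + ξ / 2) * conj (g (p.1 - ξ / 2))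

theorem crossWigner_eq (ε : ℝ) (f g : ℝ → ℂ) (p : ℝ × ℝ) :
    crossWigner ε f g p = (1 / (2 * Real.pi * ε) : ℝ) * ∫ ξ, wignerIntegrand ε f g p ξ :=
  rfl

theorem norm_wignerIntegrand (ε : ℝ) (f g : ℝ → ℂ) (p : ℝ × ℝ) (ξ : ℝ) :
    ‖wignerIntegrand ε f g p ξ‖ = ‖f (p.1 + ξ / 2)‖ * ‖g (p.1 - ξ / 2)‖ := by
  have hphase : -(I * p.2 * ξ) / ε = ((-(p.2 * ξ) / ε : ℝ) : ℂ) * I := by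
    push_cast
    ring
  rw [wignerIntegrand, norm_mul, norm_mul, RCLike.norm_conj, hphase, norm_exp_ofReal_mul_I, one_mul]

theorem continuous_wignerIntegrand (ε : ℝ) (f g : 𝓢(ℝ, ℂ)) (p : ℝ × ℝ) :
    Continuous (wignerIntegrand ε f g p) := by
  unfold wignerIntegrand
  fun_prop

theorem exists_norm_wignerIntegrand_le (ε : ℝ) (f g : 𝓢(ℝ, ℂ)) :
    ∃ C, ∀ p ξ, ‖wignerIntegrand ε f g p ξ‖ ≤ C * (1 + ξ ^ 2)⁻¹ := by
  obtain ⟨A₀, hA₀_pos, hA₀⟩ := f.decay 0 0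
  obtain ⟨A₂, hA₂_pos, hA₂⟩ := f.decay 2 0
  obtain ⟨B₀, -, hB₀⟩ := g.decay 0 0
  obtain ⟨B₂, -, hB₂⟩ := g.decay 2 0
  simp only [pow_zero, one_mul, norm_iteratedFDeriv_zero, Real.norm_eq_abs, sq_abs]
    at hA₀ hA₂ hB₀ hB₂
  refine ⟨A₀ * B₀ + 2 * (A₂ * B₀ + A₀ * B₂), fun p ξ ↦ ?_⟩
  rw [norm_wignerIntegrand, ← div_eq_mul_inv, le_div_iff₀ (by positivity)]
  generalize hy : p.1 + ξ / 2 = y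
  generalize hz : p.1 - ξ / 2 = z
  have hξ : ξ ^ 2 ≤ 2 * (y ^ 2 + z ^ 2) := by
    rw [show ξ = y - z by rw [← hy, ← hz]; ring]
    linarith [sq_nonneg (y + z)]
  calc ‖f y‖ * ‖g z‖ * (1 + ξ ^ 2)
      ≤ ‖f y‖ * ‖g z‖ * (1 + 2 * (y ^ 2 + z ^ 2)) := by gcongr
    _ = ‖f y‖ * ‖g z‖ + 2 * (y ^ 2 * ‖f y‖ * ‖g z‖ + ‖f y‖ * (z ^ 2 * ‖g z‖)) := by ring
    _ ≤ A₀ * B₀ + 2 * (A₂ * B₀ + A₀ * B₂) := by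
      gcongr <;> apply_assumption

theorem integrable_wignerIntegrand (ε : ℝ) (f g : 𝓢(ℝ, ℂ)) (p : ℝ × ℝ) :
    Integrable (wignerIntegrand ε f g p) := by
  obtain ⟨C, hC⟩ := exists_norm_wignerIntegrand_le ε f g
  exact (integrable_inv_one_add_sq.const_mul C).mono'
    (continuous_wignerIntegrand ε f g p).aestronglyMeasurable (.of_forall (hC p))

/-- The value of the cross-Wigner transform at a fixed phase-space point, as a sesquilinear form on
Schwartz functions. -/
noncomputable def wignerForm (ε : ℝ) (p : ℝ × ℝ) : 𝓢(ℝ, ℂ) →ₗ[ℂ] 𝓢(ℝ, ℂ) →ₗ⋆[ℂ] ℂ :=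
  LinearMap.mk₂'ₛₗ _ _ (fun f g ↦ crossWigner ε f g p)
    (fun f₁ f₂ g ↦ by
      simp only [crossWigner_eq, ← mul_add]
      rw [← integral_add (integrable_wignerIntegrand ..) (integrable_wignerIntegrand ..)]
      simp only [wignerIntegrand, add_apply, mul_add, add_mul])
    (fun c f g ↦ by
      simp only [crossWigner_eq, RingHom.id_apply, smul_eq_mul, mul_left_comm c,
        ← integral_const_mul c]
      simp only [wignerIntegrand, smul_apply, smul_eq_mul, mul_left_comm c, mul_assoc])
    (fun f g₁ g₂ ↦ by
      simp only [crossWigner_eq, ← mul_add]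
      rw [← integral_add (integrable_wignerIntegrand ..) (integrable_wignerIntegrand ..)]
      simp only [wignerIntegrand, add_apply, map_add, mul_add])
    (fun c f g ↦ by
      simp only [crossWigner_eq, smul_eq_mul, mul_left_comm (conj c),
        ← integral_const_mul (conj c)]
      simp only [wignerIntegrand, smul_apply, smul_eq_mul, map_mul, mul_left_comm (conj c)])

theorem wignerForm_apply (ε : ℝ) (p : ℝ × ℝ) (f g : 𝓢(ℝ, ℂ)) :
    wignerForm ε p f g = crossWigner ε f g p :=
  rfl

end CrossWigner

section BoppShifts

/-- The coordinate one-form `dx` on phase space, with complex values. -/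
noncomputable def dx : ℝ × ℝ →L[ℝ] ℂ :=
  ofRealCLM ∘L .fst ℝ ℝ ℝ

/-- The coordinate one-form `dk` on phase space, with complex values. -/
noncomputable def dk : ℝ × ℝ →L[ℝ] ℂ :=
  ofRealCLM ∘L .snd ℝ ℝ ℝ

variable {ε : ℝ}

/-- The differential in the phase-space variable of the integrand of the cross-Wigner transform, in
terms of the position and momentum operators applied to `f` and `g`. -/
noncomputable def wignerIntegrandFDeriv (ε : ℝ) (f g : 𝓢(ℝ, ℂ)) (p : ℝ × ℝ) (ξ : ℝ) :
    ℝ × ℝ →L[ℝ] ℂ :=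
  (I / ε) •
    ((wignerIntegrand ε (momentum ε f) g p ξ - wignerIntegrand ε f (momentum ε g) p ξ) • dx -
      (wignerIntegrand ε (position f) g p ξ - wignerIntegrand ε f (position g) p ξ) • dk)

theorem hasFDerivAt_wignerIntegrand (hε : ε ≠ 0) (f g : 𝓢(ℝ, ℂ)) (p : ℝ × ℝ) (ξ : ℝ) :
    HasFDerivAt (fun q ↦ wignerIntegrand ε f g q ξ) (wignerIntegrandFDeriv ε f g p ξ) p := by
  have hphase : HasFDerivAt (fun q : ℝ × ℝ ↦ cexp (-(I * q.2 * ξ) / ε))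
      (cexp (-(I * p.2 * ξ) / ε) • (-(I * ξ) / ε) • dk) p := by
    refine (((dk.hasFDerivAt (x := p)).const_mul (-(I * ξ) / ε)).congr_of_eventuallyEq
      (.of_forall fun q ↦ ?_)).cexp
    change -(I * q.2 * ξ) / ε = -(I * ξ) / ε * q.2
    ring
  have hf : HasFDerivAt (fun q : ℝ × ℝ ↦ f (q.1 + ξ / 2))
      ((I / ε * momentum ε f (p.1 + ξ / 2)) • dx) p := by
    refine ((hasDerivAt_momentum hε f (p.1 + ξ / 2)).hasFDerivAt.comp p
      (hasFDerivAt_fst.add_const (ξ / 2))).congr_fderiv ?_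
    ext <;> simp [dx]
  have hg : HasFDerivAt (fun q : ℝ × ℝ ↦ conj (g (q.1 - ξ / 2)))
      (conj (I / ε * momentum ε g (p.1 - ξ / 2)) • dx) p := by
    refine ((hasDerivAt_momentum hε g (p.1 - ξ / 2)).star.hasFDerivAt.comp p
      (hasFDerivAt_fst.sub_const (ξ / 2))).congr_fderiv ?_
    ext <;> simp [dx]
  refine ((hphase.mul hf).mul hg).congr_fderiv ?_
  simp only [wignerIntegrandFDeriv, wignerIntegrand, position_apply, map_mul, map_div₀, conj_I,
    conj_ofReal, Pi.mul_apply]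
  match_scalars <;> ring

theorem exists_norm_wignerIntegrandFDeriv_le (ε : ℝ) (f g : 𝓢(ℝ, ℂ)) :
    ∃ C, ∀ p ξ, ‖wignerIntegrandFDeriv ε f g p ξ‖ ≤ C * (1 + ξ ^ 2)⁻¹ := by
  obtain ⟨C₁, hC₁⟩ := exists_norm_wignerIntegrand_le ε (momentum ε f) g
  obtain ⟨C₂, hC₂⟩ := exists_norm_wignerIntegrand_le ε f (momentum ε g)
  obtain ⟨C₃, hC₃⟩ := exists_norm_wignerIntegrand_le ε (position f) g
  obtain ⟨C₄, hC₄⟩ := exists_norm_wignerIntegrand_le ε f (position g)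
  refine ⟨‖I / (ε : ℂ)‖ * ((C₁ + C₂) * ‖dx‖ + (C₃ + C₄) * ‖dk‖), fun p ξ ↦ ?_⟩
  have hdx := norm_sub_le_of_le (hC₁ p ξ) (hC₂ p ξ)
  have hdk := norm_sub_le_of_le (hC₃ p ξ) (hC₄ p ξ)
  rw [← add_mul] at hdx hdk
  rw [wignerIntegrandFDeriv, norm_smul, mul_assoc]
  gcongr
  refine (norm_sub_le _ _).trans ?_
  rw [norm_smul, norm_smul, add_mul, mul_right_comm, mul_right_comm (C₃ + C₄)]
  gcongr

theorem hasFDerivAt_crossWigner (hε : ε ≠ 0) (f g : 𝓢(ℝ, ℂ)) (p : ℝ × ℝ) :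
    HasFDerivAt (crossWigner ε f g)
      ((I / ε) •
        ((crossWigner ε (momentum ε f) g p - crossWigner ε f (momentum ε g) p) • dx -
          (crossWigner ε (position f) g p - crossWigner ε f (position g) p) • dk)) p := by
  obtain ⟨C, hC⟩ := exists_norm_wignerIntegrandFDeriv_le ε f g
  have hint := integrable_wignerIntegrand ε
  have hdx := ((hint (momentum ε f) g p).sub (hint f (momentum ε g) p)).smul_const dx
  have hdk := ((hint (position f) g p).sub (hint f (position g) p)).smul_const dk
  have hderiv := hasFDerivAt_integral_of_dominated_of_fderiv_le Filter.univ_mem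
    (.of_forall fun q ↦ (hint f g q).aestronglyMeasurable) (hint f g p)
    ((hdx.sub hdk).smul (I / ε : ℂ)).aestronglyMeasurable
    (.of_forall fun ξ q _ ↦ hC q ξ) (integrable_inv_one_add_sq.const_mul C)
    (.of_forall fun ξ q _ ↦ hasFDerivAt_wignerIntegrand hε f g q ξ)
  refine (hderiv.const_mul ((1 / (2 * Real.pi * ε) : ℝ) : ℂ)).congr_fderiv ?_
  simp only [Pi.sub_apply] at hdx hdk
  simp only [wignerIntegrandFDeriv, crossWigner_eq]
  rw [integral_smul, integral_sub hdx hdk, integral_smul_const, integral_smul_const,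
    integral_sub (hint _ _ _) (hint _ _ _), integral_sub (hint _ _ _) (hint _ _ _)]
  module

theorem contDiff_crossWigner (hε : ε ≠ 0) (f g : 𝓢(ℝ, ℂ)) :
    ContDiff ℝ (⊤ : ℕ∞) (crossWigner ε f g) := by
  refine contDiff_infty.2 fun n ↦ ?_
  induction n generalizing f g with
  | zero =>
    exact contDiff_zero.2 (continuous_iff_continuousAt.2 fun p ↦
      (hasFDerivAt_crossWigner hε f g p).continuousAt)
  | succ n ih =>
    refine contDiff_succ_iff_hasFDerivAt.2 ⟨_, ?_, hasFDerivAt_crossWigner hε f g⟩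
    exact .const_smul _ ((((ih _ _).sub (ih _ _)).smul contDiff_const).sub
      (((ih _ _).sub (ih _ _)).smul contDiff_const))

theorem deriv_crossWigner_fst (hε : ε ≠ 0) (f g : 𝓢(ℝ, ℂ)) (x k : ℝ) :
    deriv (fun x' ↦ crossWigner ε f g (x', k)) x =
      I / ε * (crossWigner ε (momentum ε f) g (x, k) - crossWigner ε f (momentum ε g) (x, k)) := by
  have := (hasFDerivAt_crossWigner hε f g (x, k)).comp_hasDerivAt x
    ((hasDerivAt_id' x).prodMk (hasDerivAt_const x k))
  simpa [dx, dk, Function.comp_def] using this.deriv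

theorem deriv_crossWigner_snd (hε : ε ≠ 0) (f g : 𝓢(ℝ, ℂ)) (x k : ℝ) :
    deriv (fun k' ↦ crossWigner ε f g (x, k')) k =
      I / ε * (crossWigner ε f (position g) (x, k) - crossWigner ε (position f) g (x, k)) := by
  have := (hasFDerivAt_crossWigner hε f g (x, k)).comp_hasDerivAt k
    ((hasDerivAt_const k x).prodMk (hasDerivAt_id' k))
  simpa [dx, dk, Function.comp_def] using this.deriv

theorem fst_mul_crossWigner (ε : ℝ) (f g : 𝓢(ℝ, ℂ)) (p : ℝ × ℝ) :
    p.1 * crossWigner ε f g p =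
      1 / 2 * (crossWigner ε (position f) g p + crossWigner ε f (position g) p) := by
  have hmidpoint (ξ : ℝ) : p.1 * wignerIntegrand ε f g p ξ =
      1 / 2 * (wignerIntegrand ε (position f) g p ξ + wignerIntegrand ε f (position g) p ξ) := by
    simp only [wignerIntegrand, position_apply, map_mul, conj_ofReal]
    push_cast
    ring
  simp only [crossWigner_eq]
  rw [← mul_add, ← integral_add (integrable_wignerIntegrand ..) (integrable_wignerIntegrand ..),
    mul_left_comm (p.1 : ℂ), mul_left_comm (1 / 2 : ℂ), ← integral_const_mul (p.1 : ℂ),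
    ← integral_const_mul (1 / 2 : ℂ)]
  simp only [hmidpoint]

theorem hasDerivAt_wignerIntegrand (hε : ε ≠ 0) (f g : 𝓢(ℝ, ℂ)) (p : ℝ × ℝ) (ξ : ℝ) :
    HasDerivAt (wignerIntegrand ε f g p)
      (I / ε * (1 / 2 * (wignerIntegrand ε (momentum ε f) g p ξ +
        wignerIntegrand ε f (momentum ε g) p ξ) - p.2 * wignerIntegrand ε f g p ξ)) ξ := by
  have hphase : HasDerivAt (fun ξ : ℝ ↦ cexp (-(I * p.2 * ξ) / ε))
      (cexp (-(I * p.2 * ξ) / ε) * (-(I * p.2 * 1) / ε)) ξ :=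
    ((((ofRealCLM.hasDerivAt (x := ξ)).const_mul (I * p.2)).neg).div_const (ε : ℂ)).cexp
  have hhalf : HasDerivAt (fun ξ : ℝ ↦ ξ / 2) (1 / 2) ξ := (hasDerivAt_id' ξ).div_const 2
  have hf := (hasDerivAt_momentum hε f (p.1 + ξ / 2)).scomp ξ (hhalf.const_add p.1)
  have hg := ((hasDerivAt_momentum hε g (p.1 - ξ / 2)).scomp ξ (hhalf.const_sub p.1)).star
  refine ((hphase.mul hf).mul hg).congr_deriv ?_
  simp only [wignerIntegrand, Pi.mul_apply, Function.comp_apply, real_smul, RCLike.star_def,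
    map_mul, map_div₀, conj_I, conj_ofReal]
  push_cast
  ring

theorem snd_mul_crossWigner (hε : ε ≠ 0) (f g : 𝓢(ℝ, ℂ)) (p : ℝ × ℝ) :
    p.2 * crossWigner ε f g p =
      1 / 2 * (crossWigner ε (momentum ε f) g p + crossWigner ε f (momentum ε g) p) := by
  have hsum := ((integrable_wignerIntegrand ε (momentum ε f) g p).add
    (integrable_wignerIntegrand ε f (momentum ε g) p)).const_mul (1 / 2 : ℂ)
  have hmul := (integrable_wignerIntegrand ε f g p).const_mul (p.2 : ℂ)
  have hzero := integral_eq_zero_of_hasDerivAt_of_integrable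
    (hasDerivAt_wignerIntegrand hε f g p) ((hsum.sub hmul).const_mul (I / ε : ℂ))
    (integrable_wignerIntegrand ε f g p)
  have hIε : I / (ε : ℂ) ≠ 0 := div_ne_zero I_ne_zero (mod_cast hε)
  simp only [Pi.add_apply] at hsum
  rw [integral_const_mul, mul_eq_zero_iff_left hIε, integral_sub hsum hmul, integral_const_mul,
    integral_const_mul,
    integral_add (integrable_wignerIntegrand ..) (integrable_wignerIntegrand ..)] at hzero
  simp only [crossWigner_eq]
  linear_combination (-(1 / (2 * Real.pi * ε) : ℝ) : ℂ) * hzero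

end BoppShifts

section Liouville

variable {ε : ℝ}

theorem liouville_crossWigner (hε : ε ≠ 0) (f g : 𝓢(ℝ, ℂ)) (x k : ℝ) :
    k * deriv (fun x' ↦ crossWigner ε f g (x', k)) x -
        x * deriv (fun k' ↦ crossWigner ε f g (x, k')) k =
      I / ε * (crossWigner ε (oscillator ε f) g (x, k) -
        crossWigner ε f (oscillator ε g) (x, k)) := by
  have hx := fst_mul_crossWigner ε (p := (x, k))
  have hk := snd_mul_crossWigner hε (p := (x, k))
  have hHf : crossWigner ε (oscillator ε f) g (x, k) =
      1 / 2 * (crossWigner ε (momentum ε (momentum ε f)) g (x, k) +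
        crossWigner ε (position (position f)) g (x, k)) := by
    simp only [oscillator_apply, ← wignerForm_apply, map_smul, map_add, LinearMap.smul_apply,
      LinearMap.add_apply, smul_eq_mul]
  have hHg : crossWigner ε f (oscillator ε g) (x, k) =
      1 / 2 * (crossWigner ε f (momentum ε (momentum ε g)) (x, k) +
        crossWigner ε f (position (position g)) (x, k)) := by
    simp only [oscillator_apply, ← wignerForm_apply, map_smulₛₗ, map_add, smul_eq_mul, map_div₀,
      map_one, map_ofNat]
  rw [deriv_crossWigner_fst hε, deriv_crossWigner_snd hε, hHf, hHg]
  linear_combination I / ε * (hk (momentum ε f) g - hk f (momentum ε g) +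
    hx (position f) g - hx f (position g))

theorem liouville_crossWigner_of_eigen (hε : ε ≠ 0) {f g : 𝓢(ℝ, ℂ)} {E E' : ℝ}
    (hf : oscillator ε f = (E : ℂ) • f) (hg : oscillator ε g = (E' : ℂ) • g) (x k : ℝ) :
    k * deriv (fun x' ↦ crossWigner ε f g (x', k)) x -
        x * deriv (fun k' ↦ crossWigner ε f g (x, k')) k =
      I * ((E - E') / ε) * crossWigner ε f g (x, k) := by
  rw [liouville_crossWigner hε, hf, hg]
  simp only [← wignerForm_apply, map_smul, map_smulₛₗ, LinearMap.smul_apply, conj_ofReal,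
    smul_eq_mul]
  ring

end Liouville

end HarmonicMoyal

/-- The harmonic Moyal eigenfunction `Ψ^ε_{nm} = W^ε[ψ_n^ε, ψ_m^ε]` is smooth and satisfies the
quantum Liouville eigenvalue equation `k ∂_x Ψ - x ∂_k Ψ = i(n-m) Ψ`. -/
theorem harmonic_moyal_liouville_eigen (ε : ℝ) (hε : 0 < ε) (n m : ℕ) :
    ContDiff ℝ (⊤ : ℕ∞) (crossWigner ε (hermiteScaled ε n) (hermiteScaled ε m)) ∧
    ∀ x k : ℝ,
      (k : ℂ) * deriv (fun x' => crossWigner ε (hermiteScaled ε n) (hermiteScaled ε m) (x', k)) x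
        - (x : ℂ) * deriv (fun k' => crossWigner ε (hermiteScaled ε n) (hermiteScaled ε m) (x, k')) k
      = Complex.I * ((n : ℂ) - (m : ℂ)) *
          crossWigner ε (hermiteScaled ε n) (hermiteScaled ε m) (x, k) := by
  obtain ⟨f, hf, hHf⟩ := HarmonicMoyal.exists_schwartzMap_eq_hermiteScaled hε n
  obtain ⟨g, hg, hHg⟩ := HarmonicMoyal.exists_schwartzMap_eq_hermiteScaled hε m
  rw [← hf, ← hg]
  refine ⟨HarmonicMoyal.contDiff_crossWigner hε.ne' f g, fun x k ↦ ?_⟩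
  have hgap : (((ε * (n + 1 / 2) : ℝ) : ℂ) - ((ε * (m + 1 / 2) : ℝ) : ℂ)) / ε = n - m := by
    have hεC : (ε : ℂ) ≠ 0 := mod_cast hε.ne'
    push_cast
    field_simp
    ring
  rw [HarmonicMoyal.liouville_crossWigner_of_eigen hε.ne' hHf hHg, hgap]
end

section
/- Let ε > 0 and n, m ∈ ℕ. The harmonic Moyal eigenfunction Ψ^ε_{nm} = W^ε[ψ_n^ε, ψ_m^ε] satisfies, pointwise, the eigenvalue equation of the harmonic cosine-bracket (Baker) operator: −(ε²/8)(∂_x² + ∂_k²) Ψ^ε_{nm}(x,k) + ((x² + k²)/2) Ψ^ε_{nm}(x,k) = (ε (n + m + 1)/2) Ψ^ε_{nm}(x,k), i.e. the eigenvalue is (E_n^ε + E_m^ε)/2 where E_n^ε = ε(n+1/2). -/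
open MeasureTheory

/-!
On Schwartz functions the cross-Wigner transform `W = W^ε` intertwines phase-space and
configuration-space operators. With `X` the multiplication by the variable and `D` the derivative,
* `x W[f, g] = (W[X f, g] + W[f, X g]) / 2`, because `x` is the midpoint of `x ± ξ / 2`;
* `∂_k W[f, g] = -(i / ε) (W[X f, g] - W[f, X g])`, because `ξ` is their difference;
* `∂_x W[f, g] = W[D f, g] + W[f, D g]`;
* `k W[f, g] = -(i ε / 2) (W[D f, g] - W[f, D g])`, by integration by parts in `ξ`.

Squaring these four identities, the mixed terms `W[X f, X g]` and `W[D f, D g]` cancel in the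
Baker operator, which therefore sends `W[f, g]` to `(W[H f, g] + W[f, H g]) / 2` with `H` the
harmonic oscillator.
-/

open Polynomial SchwartzMap

local notation "𝒟" => SchwartzMap.derivCLM ℂ ℂ

/-- The position operator of quantum mechanics on Schwartz functions: multiplication by the
variable. -/
noncomputable def positionOp : 𝓢(ℝ, ℂ) →L[ℂ] 𝓢(ℝ, ℂ) :=
  smulLeftCLM ℂ fun x : ℝ => (x : ℂ)

theorem positionOp_apply (f : 𝓢(ℝ, ℂ)) (x : ℝ) : positionOp f x = x * f x :=
  smulLeftCLM_apply_apply (by fun_prop) f x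

/-- The semiclassical harmonic oscillator `-(ε²/2) ∂² + x²/2` on Schwartz functions. -/
noncomputable def harmonicOscillator (ε : ℝ) : 𝓢(ℝ, ℂ) →L[ℂ] 𝓢(ℝ, ℂ) :=
  (-((ε : ℂ) ^ 2 / 2)) • (𝒟 ∘L 𝒟) + (1 / 2 : ℂ) • (positionOp ∘L positionOp)

theorem harmonicOscillator_apply (ε : ℝ) (f : 𝓢(ℝ, ℂ)) :
    harmonicOscillator ε f =
      (-((ε : ℂ) ^ 2 / 2)) • 𝒟 (𝒟 f) + (1 / 2 : ℂ) • positionOp (positionOp f) :=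
  rfl

/-- The harmonic cosine-bracket (Baker) operator `-(ε²/8)(∂_x² + ∂_k²) + (x² + k²)/2`, acting on
functions of the phase-space point `(x, k)`. -/
noncomputable def bakerOperator (ε : ℝ) (F : ℝ × ℝ → ℂ) (p : ℝ × ℝ) : ℂ :=
  -((ε : ℂ) ^ 2 / 8) *
    (iteratedDeriv 2 (fun x => F (x, p.2)) p.1 + iteratedDeriv 2 (fun k => F (p.1, k)) p.2)
    + (((p.1 : ℂ) ^ 2 + (p.2 : ℂ) ^ 2) / 2) * F p

/-! ### The integrand of the cross-Wigner transform -/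

/-- The integrand of `crossWigner ε f g p`, as a function of the correlation variable `ξ`. -/
noncomputable def wignerIntegrand (ε : ℝ) (p : ℝ × ℝ) (f g : ℝ → ℂ) (ξ : ℝ) : ℂ :=
  Complex.exp (-(Complex.I * p.2 * ξ) / ε) * f (p.1 + ξ / 2) * (starRingEnd ℂ) (g (p.1 - ξ / 2))

theorem crossWigner_eq_integral_wignerIntegrand (ε : ℝ) (f g : ℝ → ℂ) (p : ℝ × ℝ) :
    crossWigner ε f g p = ((1 / (2 * Real.pi * ε) : ℝ) : ℂ) * ∫ ξ, wignerIntegrand ε p f g ξ :=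
  rfl

theorem norm_wignerIntegrand (ε : ℝ) (p : ℝ × ℝ) (f g : ℝ → ℂ) (ξ : ℝ) :
    ‖wignerIntegrand ε p f g ξ‖ = ‖f (p.1 + ξ / 2)‖ * ‖g (p.1 - ξ / 2)‖ := by
  have exponent_eq : -(Complex.I * p.2 * ξ) / ε = ((-(p.2 * ξ) / ε : ℝ) : ℂ) * Complex.I := by
    push_cast
    ring
  rw [wignerIntegrand, norm_mul, norm_mul, exponent_eq, Complex.norm_exp_ofReal_mul_I, one_mul,
    RCLike.norm_conj]

theorem continuous_wignerIntegrand (ε : ℝ) (p : ℝ × ℝ) {f g : ℝ → ℂ} (hf : Continuous f)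
    (hg : Continuous g) : Continuous (wignerIntegrand ε p f g) := by
  unfold wignerIntegrand
  fun_prop

theorem exists_norm_le_mul_inv_one_add_sq (f : 𝓢(ℝ, ℂ)) :
    ∃ C : ℝ, ∀ x, ‖f x‖ ≤ C * (1 + x ^ 2)⁻¹ := by
  refine ⟨SchwartzMap.seminorm ℂ 0 0 f + SchwartzMap.seminorm ℂ 2 0 f, fun x => ?_⟩
  have quadratic_decay := norm_pow_mul_le_seminorm ℂ f 2 x
  rw [Real.norm_eq_abs, sq_abs] at quadratic_decay
  rw [← div_eq_mul_inv, le_div_iff₀ (by positivity)]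
  linarith [norm_le_seminorm ℂ f x]

theorem one_add_sub_sq_le (a b : ℝ) : 1 + (a - b) ^ 2 ≤ 2 * ((1 + a ^ 2) * (1 + b ^ 2)) := by
  nlinarith [sq_nonneg (a + b), sq_nonneg (a * b)]

section Schwartz

variable (ε : ℝ) (f g : 𝓢(ℝ, ℂ))

theorem exists_integrable_bound_wignerIntegrand :
    ∃ bound : ℝ → ℝ, Integrable bound ∧ ∀ p ξ, ‖wignerIntegrand ε p f g ξ‖ ≤ bound ξ := by
  obtain ⟨C, hC⟩ := exists_norm_le_mul_inv_one_add_sq f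
  obtain ⟨C', hC'⟩ := exists_norm_le_mul_inv_one_add_sq g
  have hC_nonneg : 0 ≤ C := by simpa using (norm_nonneg _).trans (hC 0)
  have hC'_nonneg : 0 ≤ C' := by simpa using (norm_nonneg _).trans (hC' 0)
  refine ⟨fun ξ => C * C' * 2 * (1 + ξ ^ 2)⁻¹, integrable_inv_one_add_sq.const_mul _,
    fun p ξ => ?_⟩
  set a := p.1 + ξ / 2 with ha
  set b := p.1 - ξ / 2 with hb
  have weight_le : ((1 + a ^ 2) * (1 + b ^ 2))⁻¹ ≤ 2 * (1 + ξ ^ 2)⁻¹ := by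
    have h := one_add_sub_sq_le a b
    rw [show a - b = ξ by rw [ha, hb]; ring] at h
    rwa [← div_eq_mul_inv, inv_le_iff_one_le_mul₀ (by positivity), div_mul_eq_mul_div,
      one_le_div (by positivity)]
  calc ‖wignerIntegrand ε p f g ξ‖ = ‖f a‖ * ‖g b‖ := norm_wignerIntegrand ε p f g ξ
    _ ≤ (C * (1 + a ^ 2)⁻¹) * (C' * (1 + b ^ 2)⁻¹) := by gcongr <;> apply_assumption
    _ = C * C' * ((1 + a ^ 2) * (1 + b ^ 2))⁻¹ := by rw [mul_inv]; ring
    _ ≤ C * C' * (2 * (1 + ξ ^ 2)⁻¹) := by gcongr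
    _ = C * C' * 2 * (1 + ξ ^ 2)⁻¹ := by ring

theorem integrable_wignerIntegrand (p : ℝ × ℝ) : Integrable (wignerIntegrand ε p f g) := by
  obtain ⟨bound, bound_integrable, norm_le⟩ := exists_integrable_bound_wignerIntegrand ε f g
  exact bound_integrable.mono'
    (continuous_wignerIntegrand ε p f.continuous g.continuous).aestronglyMeasurable
    (.of_forall (norm_le p))

theorem hasDerivAt_wignerIntegrand_fst (x k ξ : ℝ) :
    HasDerivAt (fun x => wignerIntegrand ε (x, k) f g ξ)
      (wignerIntegrand ε (x, k) (𝒟 f) g ξ + wignerIntegrand ε (x, k) f (𝒟 g) ξ) x := by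
  have hf := (f.hasDerivAt (x + ξ / 2)).comp_add_const x (ξ / 2)
  have hg := ((g.hasDerivAt (x - ξ / 2)).comp_sub_const x (ξ / 2)).star
  refine ((hf.const_mul (Complex.exp (-(Complex.I * k * ξ) / ε))).mul hg).congr_deriv ?_
  simp only [wignerIntegrand, derivCLM_apply]
  rfl

theorem hasDerivAt_wignerIntegrand_snd (x k ξ : ℝ) :
    HasDerivAt (fun k => wignerIntegrand ε (x, k) f g ξ)
      (-Complex.I / ε * wignerIntegrand ε (x, k) (positionOp f) g ξ
        + Complex.I / ε * wignerIntegrand ε (x, k) f (positionOp g) ξ) k := by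
  have hexp := ((((hasDerivAt_id k).ofReal_comp.const_mul Complex.I).mul_const
    (ξ : ℂ)).fun_neg.div_const (ε : ℂ)).cexp
  refine ((hexp.mul_const (f (x + ξ / 2))).mul_const
    ((starRingEnd ℂ) (g (x - ξ / 2)))).congr_deriv ?_
  simp only [wignerIntegrand, positionOp_apply, map_mul, Complex.conj_ofReal, id]
  push_cast
  ring

theorem hasDerivAt_wignerIntegrand (x k ξ : ℝ) :
    HasDerivAt (wignerIntegrand ε (x, k) f g)
      (-(Complex.I * k) / ε * wignerIntegrand ε (x, k) f g ξ
        + 1 / 2 * (wignerIntegrand ε (x, k) (𝒟 f) g ξ - wignerIntegrand ε (x, k) f (𝒟 g) ξ)) ξ := by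
  have hexp := (((hasDerivAt_id ξ).ofReal_comp.const_mul (Complex.I * k)).fun_neg.div_const
    (ε : ℂ)).cexp
  have hf := (f.hasDerivAt (x + ξ / 2)).scomp ξ (((hasDerivAt_id ξ).div_const 2).const_add x)
  have hg := ((g.hasDerivAt (x - ξ / 2)).scomp ξ
    (((hasDerivAt_id ξ).div_const 2).const_sub x)).star
  refine ((hexp.mul hf).mul hg).congr_deriv ?_
  simp only [wignerIntegrand, derivCLM_apply, Complex.real_smul, Function.comp_apply, Pi.mul_apply,
    id, Complex.star_def, map_mul, Complex.conj_ofReal]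
  push_cast
  ring

end Schwartz

/-! ### The Wigner form on Schwartz functions -/

theorem crossWigner_add_left (ε : ℝ) (f₁ f₂ g : 𝓢(ℝ, ℂ)) (p : ℝ × ℝ) :
    crossWigner ε ⇑(f₁ + f₂) g p = crossWigner ε f₁ g p + crossWigner ε f₂ g p := by
  simp only [crossWigner_eq_integral_wignerIntegrand]
  rw [← mul_add, ← integral_add (integrable_wignerIntegrand ε f₁ g p)
    (integrable_wignerIntegrand ε f₂ g p)]
  simp only [wignerIntegrand, add_apply, mul_add, add_mul]

theorem crossWigner_add_right (ε : ℝ) (f g₁ g₂ : 𝓢(ℝ, ℂ)) (p : ℝ × ℝ) :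
    crossWigner ε f ⇑(g₁ + g₂) p = crossWigner ε f g₁ p + crossWigner ε f g₂ p := by
  simp only [crossWigner_eq_integral_wignerIntegrand]
  rw [← mul_add, ← integral_add (integrable_wignerIntegrand ε f g₁ p)
    (integrable_wignerIntegrand ε f g₂ p)]
  simp only [wignerIntegrand, add_apply, map_add, mul_add]

theorem crossWigner_smul_left (ε : ℝ) (c : ℂ) (f g : ℝ → ℂ) (p : ℝ × ℝ) :
    crossWigner ε (c • f) g p = c * crossWigner ε f g p := by
  simp only [crossWigner_eq_integral_wignerIntegrand]
  rw [mul_left_comm c, ← integral_const_mul c]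
  congr with ξ
  simp only [wignerIntegrand, Pi.smul_apply, smul_eq_mul]
  ring

theorem crossWigner_smul_right (ε : ℝ) (c : ℂ) (f g : ℝ → ℂ) (p : ℝ × ℝ) :
    crossWigner ε f (c • g) p = (starRingEnd ℂ) c * crossWigner ε f g p := by
  simp only [crossWigner_eq_integral_wignerIntegrand]
  rw [mul_left_comm ((starRingEnd ℂ) c), ← integral_const_mul ((starRingEnd ℂ) c)]
  congr with ξ
  simp only [wignerIntegrand, Pi.smul_apply, smul_eq_mul, map_mul]
  ring

/-- The cross-Wigner transform of Schwartz functions at a fixed phase-space point, as a sesquilinear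
form, conjugate-linear in the second argument. -/
noncomputable def wignerForm (ε : ℝ) (p : ℝ × ℝ) : 𝓢(ℝ, ℂ) →ₗ[ℂ] 𝓢(ℝ, ℂ) →ₗ⋆[ℂ] ℂ :=
  LinearMap.mk₂'ₛₗ (RingHom.id ℂ) (starRingEnd ℂ) (fun f g => crossWigner ε f g p)
    (fun f₁ f₂ g => crossWigner_add_left ε f₁ f₂ g p)
    (fun c f g => crossWigner_smul_left ε c f g p)
    (fun f g₁ g₂ => crossWigner_add_right ε f g₁ g₂ p)
    (fun c f g => crossWigner_smul_right ε c f g p)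

section WignerForm

variable (ε : ℝ) (f g : 𝓢(ℝ, ℂ))

theorem wignerForm_apply (p : ℝ × ℝ) : wignerForm ε p f g = crossWigner ε f g p :=
  rfl

theorem wignerForm_eq_integral (p : ℝ × ℝ) :
    wignerForm ε p f g = ((1 / (2 * Real.pi * ε) : ℝ) : ℂ) * ∫ ξ, wignerIntegrand ε p f g ξ :=
  rfl

variable {ε f g} in
theorem hasDerivAt_wignerForm_of_wignerIntegrand {f₁ g₁ f₂ g₂ : 𝓢(ℝ, ℂ)} {c₁ c₂ : ℂ}
    {γ : ℝ → ℝ × ℝ}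
    (hderiv : ∀ t ξ, HasDerivAt (fun t => wignerIntegrand ε (γ t) f g ξ)
      (c₁ * wignerIntegrand ε (γ t) f₁ g₁ ξ + c₂ * wignerIntegrand ε (γ t) f₂ g₂ ξ) t) (t : ℝ) :
    HasDerivAt (fun t => wignerForm ε (γ t) f g)
      (c₁ * wignerForm ε (γ t) f₁ g₁ + c₂ * wignerForm ε (γ t) f₂ g₂) t := by
  obtain ⟨bound₁, hbound₁, norm_le₁⟩ := exists_integrable_bound_wignerIntegrand ε f₁ g₁
  obtain ⟨bound₂, hbound₂, norm_le₂⟩ := exists_integrable_bound_wignerIntegrand ε f₂ g₂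
  have int₁ := (integrable_wignerIntegrand ε f₁ g₁ (γ t)).const_mul c₁
  have int₂ := (integrable_wignerIntegrand ε f₂ g₂ (γ t)).const_mul c₂
  have norm_deriv_le (t ξ : ℝ) :
      ‖c₁ * wignerIntegrand ε (γ t) f₁ g₁ ξ + c₂ * wignerIntegrand ε (γ t) f₂ g₂ ξ‖
        ≤ ‖c₁‖ * bound₁ ξ + ‖c₂‖ * bound₂ ξ := by
    refine (norm_add_le _ _).trans ?_
    rw [norm_mul, norm_mul]
    gcongr
    exacts [norm_le₁ _ _, norm_le₂ _ _]
  have h := (hasDerivAt_integral_of_dominated_loc_of_deriv_le Filter.univ_mem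
    (.of_forall fun t => (integrable_wignerIntegrand ε f g (γ t)).aestronglyMeasurable)
    (integrable_wignerIntegrand ε f g (γ t)) (int₁.add int₂).aestronglyMeasurable
    (.of_forall fun ξ t _ => norm_deriv_le t ξ) ((hbound₁.const_mul _).add (hbound₂.const_mul _))
    (.of_forall fun ξ t _ => hderiv t ξ)).2
  refine (h.const_mul ((1 / (2 * Real.pi * ε) : ℝ) : ℂ)).congr_deriv ?_
  rw [integral_add int₁ int₂, integral_const_mul, integral_const_mul, wignerForm_eq_integral,
    wignerForm_eq_integral]
  ring

theorem hasDerivAt_wignerForm_fst (x k : ℝ) :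
    HasDerivAt (fun x => wignerForm ε (x, k) f g)
      (wignerForm ε (x, k) (𝒟 f) g + wignerForm ε (x, k) f (𝒟 g)) x := by
  have h := hasDerivAt_wignerForm_of_wignerIntegrand (γ := fun x => (x, k)) (c₁ := 1) (c₂ := 1)
    fun x ξ => by simpa only [one_mul] using hasDerivAt_wignerIntegrand_fst ε f g x k ξ
  simpa only [one_mul] using h x

theorem hasDerivAt_wignerForm_snd (x k : ℝ) :
    HasDerivAt (fun k => wignerForm ε (x, k) f g)
      (-Complex.I / ε * wignerForm ε (x, k) (positionOp f) g
        + Complex.I / ε * wignerForm ε (x, k) f (positionOp g)) k :=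
  hasDerivAt_wignerForm_of_wignerIntegrand (γ := fun k => (x, k))
    (fun k ξ => hasDerivAt_wignerIntegrand_snd ε f g x k ξ) k

theorem iteratedDeriv_two_wignerForm_fst (x k : ℝ) :
    iteratedDeriv 2 (fun x => wignerForm ε (x, k) f g) x =
      wignerForm ε (x, k) (𝒟 (𝒟 f)) g + 2 * wignerForm ε (x, k) (𝒟 f) (𝒟 g)
        + wignerForm ε (x, k) f (𝒟 (𝒟 g)) := by
  have first_deriv := funext fun x => (hasDerivAt_wignerForm_fst ε f g x k).deriv
  have second_deriv := (hasDerivAt_wignerForm_fst ε (𝒟 f) g x k).fun_add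
    (hasDerivAt_wignerForm_fst ε f (𝒟 g) x k)
  rw [iteratedDeriv_succ, iteratedDeriv_one, first_deriv, second_deriv.deriv]
  ring

theorem iteratedDeriv_two_wignerForm_snd (x k : ℝ) :
    iteratedDeriv 2 (fun k => wignerForm ε (x, k) f g) k =
      -1 / (ε : ℂ) ^ 2 * (wignerForm ε (x, k) (positionOp (positionOp f)) g
        - 2 * wignerForm ε (x, k) (positionOp f) (positionOp g)
        + wignerForm ε (x, k) f (positionOp (positionOp g))) := by
  have first_deriv := funext fun k => (hasDerivAt_wignerForm_snd ε f g x k).deriv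
  have second_deriv :=
    ((hasDerivAt_wignerForm_snd ε (positionOp f) g x k).const_mul (-Complex.I / ε)).fun_add
      ((hasDerivAt_wignerForm_snd ε f (positionOp g) x k).const_mul (Complex.I / ε))
  rw [iteratedDeriv_succ, iteratedDeriv_one, first_deriv, second_deriv.deriv]
  linear_combination ((wignerForm ε (x, k) (positionOp (positionOp f)) g
    - 2 * wignerForm ε (x, k) (positionOp f) (positionOp g)
    + wignerForm ε (x, k) f (positionOp (positionOp g))) / (ε : ℂ) ^ 2) * Complex.I_sq

theorem fst_mul_wignerForm (p : ℝ × ℝ) :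
    p.1 * wignerForm ε p f g =
      1 / 2 * (wignerForm ε p (positionOp f) g + wignerForm ε p f (positionOp g)) := by
  simp only [wignerForm_eq_integral]
  rw [← mul_add, mul_left_comm, mul_left_comm (1 / 2 : ℂ),
    ← integral_add (integrable_wignerIntegrand ε _ g p) (integrable_wignerIntegrand ε f _ p),
    ← integral_const_mul (p.1 : ℂ), ← integral_const_mul (1 / 2 : ℂ)]
  congr with ξ
  simp only [wignerIntegrand, positionOp_apply, map_mul, Complex.conj_ofReal]
  push_cast
  ring

variable {ε}

theorem snd_mul_wignerForm (hε : ε ≠ 0) (p : ℝ × ℝ) :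
    p.2 * wignerForm ε p f g =
      -(Complex.I * ε / 2) * (wignerForm ε p (𝒟 f) g - wignerForm ε p f (𝒟 g)) := by
  have hε' : (ε : ℂ) ≠ 0 := Complex.ofReal_ne_zero.2 hε
  have int := integrable_wignerIntegrand ε f g p
  have int_left := integrable_wignerIntegrand ε (𝒟 f) g p
  have int_right := integrable_wignerIntegrand ε f (𝒟 g) p
  have int_sub : Integrable fun ξ =>
      (1 / 2 : ℂ) * (wignerIntegrand ε p (𝒟 f) g ξ - wignerIntegrand ε p f (𝒟 g) ξ) :=
    (int_left.sub int_right).const_mul _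
  have integral_deriv_eq_zero := integral_eq_zero_of_hasDerivAt_of_integrable
    (hasDerivAt_wignerIntegrand ε f g p.1 p.2)
    ((int.const_mul _).add int_sub) int
  rw [integral_add (int.const_mul _) int_sub, integral_const_mul,
    integral_const_mul, integral_sub int_left int_right] at integral_deriv_eq_zero
  simp only [wignerForm_eq_integral]
  field_simp at integral_deriv_eq_zero ⊢
  linear_combination Complex.I * integral_deriv_eq_zero
    + 2 * (p.2 * ∫ ξ, wignerIntegrand ε p f g ξ) * Complex.I_sq

theorem fst_sq_mul_wignerForm (p : ℝ × ℝ) :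
    (p.1 : ℂ) ^ 2 * wignerForm ε p f g =
      1 / 4 * (wignerForm ε p (positionOp (positionOp f)) g
        + 2 * wignerForm ε p (positionOp f) (positionOp g)
        + wignerForm ε p f (positionOp (positionOp g))) := by
  linear_combination p.1 * fst_mul_wignerForm ε f g p
    + 1 / 2 * fst_mul_wignerForm ε (positionOp f) g p
    + 1 / 2 * fst_mul_wignerForm ε f (positionOp g) p

theorem snd_sq_mul_wignerForm (hε : ε ≠ 0) (p : ℝ × ℝ) :
    (p.2 : ℂ) ^ 2 * wignerForm ε p f g =
      -((ε : ℂ) ^ 2 / 4) * (wignerForm ε p (𝒟 (𝒟 f)) g - 2 * wignerForm ε p (𝒟 f) (𝒟 g)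
        + wignerForm ε p f (𝒟 (𝒟 g))) := by
  linear_combination p.2 * snd_mul_wignerForm f g hε p
    - Complex.I * ε / 2 * snd_mul_wignerForm (𝒟 f) g hε p
    + Complex.I * ε / 2 * snd_mul_wignerForm f (𝒟 g) hε p
    + (ε : ℂ) ^ 2 / 4 * (wignerForm ε p (𝒟 (𝒟 f)) g - 2 * wignerForm ε p (𝒟 f) (𝒟 g)
        + wignerForm ε p f (𝒟 (𝒟 g))) * Complex.I_sq

theorem bakerOperator_crossWigner (hε : ε ≠ 0) (p : ℝ × ℝ) :
    bakerOperator ε (crossWigner ε f g) p =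
      (crossWigner ε (harmonicOscillator ε f) g p
        + crossWigner ε f (harmonicOscillator ε g) p) / 2 := by
  have hε' : (ε : ℂ) ≠ 0 := Complex.ofReal_ne_zero.2 hε
  simp only [bakerOperator, ← wignerForm_apply, harmonicOscillator_apply, map_add, map_smulₛₗ,
    LinearMap.add_apply, LinearMap.smul_apply, smul_eq_mul, RingHom.id_apply, map_neg, map_div₀,
    map_pow, Complex.conj_ofReal, map_ofNat, map_one, iteratedDeriv_two_wignerForm_fst,
    iteratedDeriv_two_wignerForm_snd, Prod.mk.eta]
  rw [div_mul_eq_mul_div (_ + _), add_mul (_ ^ 2), fst_sq_mul_wignerForm,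
    snd_sq_mul_wignerForm f g hε]
  field_simp
  ring

variable {f g}

theorem bakerOperator_crossWigner_of_eigenfunction {a b : ℂ} (hε : ε ≠ 0)
    (hf : harmonicOscillator ε f = a • f) (hg : harmonicOscillator ε g = b • g) (p : ℝ × ℝ) :
    bakerOperator ε (crossWigner ε f g) p =
      (a + (starRingEnd ℂ) b) / 2 * crossWigner ε f g p := by
  rw [bakerOperator_crossWigner f g hε, hf, hg]
  simp only [← wignerForm_apply, map_smulₛₗ, LinearMap.smul_apply, smul_eq_mul, RingHom.id_apply]
  ring

end WignerForm

/-! ### Polynomials times Gaussians -/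

theorem exists_abs_eval_le_mul_exp {b : ℝ} (hb : 0 < b) (p : ℝ[X]) :
    ∃ C : ℝ, ∀ t : ℝ, |p.eval t| ≤ C * Real.exp (b * t ^ 2) := by
  induction p using Polynomial.induction_on' with
  | add p q hp hq =>
    obtain ⟨C, hC⟩ := hp
    obtain ⟨C', hC'⟩ := hq
    refine ⟨C + C', fun t => ?_⟩
    rw [eval_add, add_mul]
    exact (abs_add_le _ _).trans (add_le_add (hC t) (hC' t))
  | monomial n a =>
    refine ⟨|a| * (1 + n.factorial / b ^ n), fun t => ?_⟩
    have one_le : 1 ≤ Real.exp (b * t ^ 2) := Real.one_le_exp (by positivity)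
    have sq_le : (t ^ n) ^ 2 ≤ n.factorial / b ^ n * Real.exp (b * t ^ 2) := by
      have h := Real.pow_div_factorial_le_exp (b * t ^ 2) (by positivity) n
      rw [div_le_iff₀ (by positivity), mul_pow] at h
      rw [div_mul_eq_mul_div, le_div_iff₀ (by positivity)]
      linarith [congrArg (b ^ n * ·) (pow_right_comm t n 2)]
    have abs_le : |t ^ n| ≤ 1 + (t ^ n) ^ 2 := by
      nlinarith [sq_abs (t ^ n), sq_nonneg (|t ^ n| - 1)]
    rw [eval_monomial, abs_mul, mul_assoc]
    gcongr
    linarith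

/-- `twistedDeriv b` is the operator on polynomials conjugate to differentiation by the Gaussian
`exp (-b t²)`: it sends `p` to the `q` with `(p exp (-b t²))' = q exp (-b t²)`. -/
noncomputable def twistedDeriv (b : ℝ) (p : ℝ[X]) : ℝ[X] :=
  derivative p - C (2 * b) * X * p

theorem hasDerivAt_eval_mul_exp (b : ℝ) (p : ℝ[X]) (t : ℝ) :
    HasDerivAt (fun t => ((p.eval t * Real.exp (-b * t ^ 2) : ℝ) : ℂ))
      ((twistedDeriv b p).eval t * Real.exp (-b * t ^ 2) : ℝ) t := by
  have hexp := ((hasDerivAt_pow 2 t).const_mul (-b)).exp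
  refine ((p.hasDerivAt t).mul hexp).ofReal_comp.congr_deriv ?_
  simp only [twistedDeriv, eval_sub, eval_mul, eval_C, eval_X]
  push_cast
  ring

theorem iteratedDeriv_eval_mul_exp (b : ℝ) (p : ℝ[X]) (n : ℕ) :
    iteratedDeriv n (fun t : ℝ => ((p.eval t * Real.exp (-b * t ^ 2) : ℝ) : ℂ)) =
      fun t => ((((twistedDeriv b)^[n] p).eval t * Real.exp (-b * t ^ 2) : ℝ) : ℂ) := by
  induction n with
  | zero => rw [iteratedDeriv_zero, Function.iterate_zero_apply]
  | succ n ih =>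
    rw [iteratedDeriv_succ, ih, Function.iterate_succ_apply']
    exact funext fun t => (hasDerivAt_eval_mul_exp b _ t).deriv

/-- The Schwartz function `p(t) exp (-b t²)`. These functions are stable under differentiation and
under multiplication by `t`, and include the rescaled Hermite functions. -/
noncomputable def polyGaussian {b : ℝ} (hb : 0 < b) (p : ℝ[X]) : 𝓢(ℝ, ℂ) where
  toFun t := ((p.eval t * Real.exp (-b * t ^ 2) : ℝ) : ℂ)
  smooth' := Complex.ofRealCLM.contDiff.comp
    ((p.contDiff_aeval _).mul ((contDiff_const.mul (contDiff_id.pow 2)).exp))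
  decay' k n := by
    obtain ⟨C, hC⟩ := exists_abs_eval_le_mul_exp hb (X ^ k * (twistedDeriv b)^[n] p)
    refine ⟨C, fun t => ?_⟩
    have h := mul_le_mul_of_nonneg_right (hC t) (Real.exp_pos (-b * t ^ 2)).le
    rw [mul_assoc C, ← Real.exp_add, neg_mul, add_neg_cancel, Real.exp_zero, mul_one, eval_mul,
      eval_pow, eval_X, abs_mul, abs_pow] at h
    rw [norm_iteratedFDeriv_eq_norm_iteratedDeriv, iteratedDeriv_eval_mul_exp, Complex.norm_real,
      Real.norm_eq_abs, Real.norm_eq_abs, abs_mul, Real.abs_exp, neg_mul, ← mul_assoc]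
    exact h

section PolyGaussian

variable {b : ℝ} (hb : 0 < b) (p : ℝ[X])

theorem polyGaussian_apply (t : ℝ) :
    polyGaussian hb p t = ((p.eval t * Real.exp (-b * t ^ 2) : ℝ) : ℂ) :=
  rfl

theorem derivCLM_polyGaussian : 𝒟 (polyGaussian hb p) = polyGaussian hb (twistedDeriv b p) :=
  SchwartzMap.ext fun t => (hasDerivAt_eval_mul_exp b p t).deriv

end PolyGaussian

theorem harmonicOscillator_polyGaussian {ε : ℝ} (hb : 0 < 1 / (2 * ε)) (p : ℝ[X]) :
    harmonicOscillator ε (polyGaussian hb p) =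
      polyGaussian hb (C (-(ε ^ 2 / 2)) * derivative (derivative p) + C ε * X * derivative p
        + C (ε / 2) * p) := by
  have hε : ε ≠ 0 := by
    rintro rfl
    simp at hb
  have hε' : (ε : ℂ) ≠ 0 := Complex.ofReal_ne_zero.2 hε
  ext t
  simp only [harmonicOscillator_apply, derivCLM_polyGaussian, add_apply, smul_apply, smul_eq_mul,
    positionOp_apply, polyGaussian_apply, twistedDeriv, derivative_sub, derivative_mul,
    derivative_C, derivative_X, eval_add, eval_sub, eval_mul, eval_C, eval_X, eval_zero, eval_one]
  push_cast
  field_simp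
  ring

/-! ### Hermite functions -/

theorem hermiteP_succ (n : ℕ) :
    hermiteP (n + 1) = C 2 * X * hermiteP n - derivative (hermiteP n) :=
  rfl

theorem derivative_hermiteP_succ (n : ℕ) :
    derivative (hermiteP (n + 1)) = C (2 * ((n : ℝ) + 1)) * hermiteP n := by
  induction n with
  | zero => simp [hermiteP]
  | succ n ih =>
    rw [hermiteP_succ (n + 1), derivative_sub, derivative_mul, ih, derivative_C_mul,
      derivative_C_mul, derivative_X, hermiteP_succ n]
    push_cast
    simp only [map_mul, map_add, map_one]
    ring

theorem derivative_derivative_hermiteP (n : ℕ) :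
    derivative (derivative (hermiteP n)) =
      C 2 * X * derivative (hermiteP n) - C (2 * (n : ℝ)) * hermiteP n := by
  cases n with
  | zero => simp [hermiteP]
  | succ n =>
    rw [derivative_hermiteP_succ, derivative_C_mul, hermiteP_succ]
    push_cast
    ring

/-- The rescaled Hermite function `ψ_n^ε` as a Schwartz function, with its normalisation and the
dilation by `√ε` absorbed into the polynomial factor. -/
noncomputable def hermiteSchwartz {ε : ℝ} (hε : 0 < ε) (n : ℕ) : 𝓢(ℝ, ℂ) :=
  polyGaussian (b := 1 / (2 * ε)) (by positivity)
    (C (ε ^ (-(1 / 4 : ℝ)) * (2 ^ n * (n.factorial : ℝ) * Real.sqrt Real.pi) ^ (-(1 / 2 : ℝ)))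
      * (hermiteP n).comp (C (Real.sqrt ε)⁻¹ * X))

theorem coe_hermiteSchwartz {ε : ℝ} (hε : 0 < ε) (n : ℕ) :
    ⇑(hermiteSchwartz hε n) = hermiteScaled ε n := by
  ext t
  have exponent_eq : -(1 / (2 * ε)) * t ^ 2 = -(t / Real.sqrt ε) ^ 2 / 2 := by
    rw [div_pow, Real.sq_sqrt hε.le]
    field_simp
  rw [hermiteSchwartz, polyGaussian_apply, exponent_eq]
  simp only [hermiteScaled, hermiteFun, eval_mul, eval_C, eval_comp, eval_X, ← div_eq_inv_mul]
  push_cast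
  ring

theorem hermiteP_comp_differential_equation {ε : ℝ} (hε : 0 < ε) (n : ℕ) :
    let p := (hermiteP n).comp (C (Real.sqrt ε)⁻¹ * X)
    C (ε ^ 2 / 2) * derivative (derivative p) = C ε * X * derivative p - C (ε * n) * p := by
  intro p
  have hsqrt : ((Real.sqrt ε)⁻¹) ^ 2 * ε = 1 := by
    rw [inv_pow, Real.sq_sqrt hε.le, inv_mul_cancel₀ hε.ne']
  refine Polynomial.funext fun t => ?_
  have hermite_eq := congrArg (eval ((Real.sqrt ε)⁻¹ * t)) (derivative_derivative_hermiteP n)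
  simp only [eval_sub, eval_mul, eval_C, eval_X] at hermite_eq
  simp only [p, derivative_comp, derivative_mul, derivative_C, derivative_X, eval_sub,
    eval_mul, eval_comp, eval_C, eval_X, zero_mul, zero_add, mul_one]
  linear_combination ε / 2 * hermite_eq
    + ε / 2 * eval ((Real.sqrt ε)⁻¹ * t) (derivative (derivative (hermiteP n))) * hsqrt

theorem harmonicOscillator_hermiteSchwartz {ε : ℝ} (hε : 0 < ε) (n : ℕ) :
    harmonicOscillator ε (hermiteSchwartz hε n) =
      ((ε * (n + 1 / 2) : ℝ) : ℂ) • hermiteSchwartz hε n := by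
  rw [hermiteSchwartz, harmonicOscillator_polyGaussian]
  ext t
  have differential_eq := congrArg (eval t) (hermiteP_comp_differential_equation hε n)
  simp only [eval_sub, eval_mul, eval_C, eval_X] at differential_eq
  simp only [smul_apply, smul_eq_mul, polyGaussian_apply, derivative_C_mul, eval_add, eval_mul,
    eval_C, eval_X, ← Complex.ofReal_mul]
  congr 1
  linear_combination (-ε ^ (-(1 / 4 : ℝ)) *
    (2 ^ n * (n.factorial : ℝ) * Real.sqrt Real.pi) ^ (-(1 / 2 : ℝ)) *
    Real.exp (-(1 / (2 * ε)) * t ^ 2)) * differential_eq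

/-- The harmonic Moyal eigenfunction `Ψ^ε_{nm} = W^ε[ψ_n^ε, ψ_m^ε]` satisfies the cosine-bracket
(Baker) eigenvalue equation
`-(ε²/8)(∂_x² + ∂_k²)Ψ + ((x²+k²)/2)Ψ = (ε(n+m+1)/2)Ψ = ((E_n^ε+E_m^ε)/2)Ψ`. -/
theorem harmonic_moyal_baker_eigen (ε : ℝ) (hε : 0 < ε) (n m : ℕ) :
    ∀ x k : ℝ,
      -((ε : ℂ) ^ 2 / 8) *
        (iteratedDeriv 2 (fun x' => crossWigner ε (hermiteScaled ε n) (hermiteScaled ε m) (x', k)) x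
          + iteratedDeriv 2 (fun k' => crossWigner ε (hermiteScaled ε n) (hermiteScaled ε m) (x, k')) k)
      + (((x : ℂ) ^ 2 + (k : ℂ) ^ 2) / 2) *
          crossWigner ε (hermiteScaled ε n) (hermiteScaled ε m) (x, k)
      = ((ε : ℂ) * ((n : ℂ) + (m : ℂ) + 1) / 2) *
          crossWigner ε (hermiteScaled ε n) (hermiteScaled ε m) (x, k) := by
  intro x k
  have h := bakerOperator_crossWigner_of_eigenfunction hε.ne'
    (harmonicOscillator_hermiteSchwartz hε n) (harmonicOscillator_hermiteSchwartz hε m) (x, k)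
  rw [coe_hermiteSchwartz, coe_hermiteSchwartz, Complex.conj_ofReal] at h
  refine h.trans ?_
  push_cast
  ring
end

section
/- Let V: ℝ → ℝ be smooth with V(0) = V'(0) = 0 and V''(0) = 1, let g_h^t(q,p) = (q cos t + p sin t, p cos t − q sin t) be the harmonic flow, and for ν ≥ 1 let B_ν be the differential operator B_ν := −V^{(ν+2)}(0) Σ_{j=0}^{⌊(ν−1)/2⌋+1} (i/2)^{2j} (1/((2j+1)! (ν+1−2j)!)) ξ^{ν+1−2j} ∂_η^{2j+1}. Fix j ≥ 1 and ν_1, …, ν_j ∈ ℕ with ν_i ≥ 1, let f ∈ 𝒮(ℝ²), and for arbitrary real times s_1, …, s_j define recursively G_j := B_{ν_j}[f ∘ g_h^{−s_j}] and G_i := B_{ν_i}[G_{i+1} ∘ g_h^{−s_i}] for i = j−1, …, 1. Then there is a constant C_{ν_1,…,ν_j} depending only on f, V and ν_1, …, ν_j (and not on s_1, …, s_j) such that ‖G_1‖_{L²(ℝ²)} ≤ C_{ν_1,…,ν_j}. -/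
open MeasureTheory

/-- The harmonic-oscillator Hamiltonian flow. -/
noncomputable def gh (t : ℝ) : ℝ × ℝ → ℝ × ℝ := fun z =>
  (z.1 * Real.cos t + z.2 * Real.sin t, z.2 * Real.cos t - z.1 * Real.sin t)

/-- The correction operator
`B_ν = -V^{(ν+2)}(0) Σ_{j=0}^{⌊(ν-1)/2⌋+1} (i/2)^{2j} (1/((2j+1)!(ν+1-2j)!)) ξ^{ν+1-2j} ∂_η^{2j+1}`. -/
noncomputable def Bop (V : ℝ → ℝ) (ν : ℕ) (f : ℝ × ℝ → ℂ) : ℝ × ℝ → ℂ := fun p =>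
  -((iteratedDeriv (ν + 2) V 0 : ℝ) : ℂ) *
    ∑ j ∈ Finset.range ((ν - 1) / 2 + 2),
      (Complex.I / 2) ^ (2 * j) *
        ((1 : ℂ) / ((((2 * j + 1).factorial * (ν + 1 - 2 * j).factorial : ℕ) : ℝ) : ℂ)) *
        (p.1 : ℂ) ^ (ν + 1 - 2 * j) *
        iteratedDeriv (2 * j + 1) (fun η => f (p.1, η)) p.2

/-- Iterated application:
`iterB V [(ν₁,s₁),...,(ν_j,s_j)] f = B_{ν₁}[B_{ν₂}[⋯ B_{ν_j}[f ∘ g_h^{-s_j}] ⋯ ∘ g_h^{-s₂}] ∘ g_h^{-s₁}]`. -/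
noncomputable def iterB (V : ℝ → ℝ) : List (ℕ × ℝ) → (ℝ × ℝ → ℂ) → (ℝ × ℝ → ℂ)
  | [], f => f
  | (ν, s) :: rest, f => Bop V ν (fun p => iterB V rest f (gh (-s) p))

/-!
Composition with the flow `gh t` and each operator `B_ν` act continuously on `𝓢(ℝ²)`. The flow is a
group of linear maps of norm at most `2`, so composing with it distorts every Schwartz seminorm by
at most a factor independent of the time. Hence, for fixed indices and all times at once, the
iterated operators send bounded sets of `𝓢(ℝ²)` into one bounded set, which the continuous embedding
`𝓢(ℝ²) → L²(ℝ²)` maps to a norm-bounded one.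
-/

section Schwartz

open SchwartzMap LineDeriv Bornology

variable {𝕜 D E F : Type*} [NormedAddCommGroup D] [NormedSpace ℝ D]
  [NormedAddCommGroup E] [NormedSpace ℝ E] [NormedAddCommGroup F] [NormedSpace ℝ F]

section LineDerivative

lemma deriv_schwartz_comp_add_smul (f : 𝓢(E, F)) (x v : E) :
    deriv (fun t : ℝ => f (x + t • v)) = fun t => (∂_{v} f) (x + t • v) := by
  funext t
  have hline : HasDerivAt (fun t : ℝ => x + t • v) v t := by
    simpa using ((hasDerivAt_id t).smul_const v).const_add x
  rw [lineDerivOp_apply_eq_fderiv]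
  exact ((f.hasFDerivAt _).comp_hasDerivAt t hline).deriv

lemma iteratedDeriv_schwartz_comp_add_smul (n : ℕ) (f : 𝓢(E, F)) (x v : E) :
    iteratedDeriv n (fun t : ℝ => f (x + t • v)) =
      fun t => (∂^{fun _ : Fin n => v} f) (x + t • v) := by
  induction n generalizing f with
  | zero => simp
  | succ n ih =>
    rw [iteratedDeriv_succ', deriv_schwartz_comp_add_smul, ih, iteratedLineDerivOp_succ_right]
    rfl

lemma iteratedDeriv_schwartz_prodMk (n : ℕ) (f : 𝓢(E × ℝ, F)) (x : E) (η : ℝ) :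
    iteratedDeriv n (fun t => f (x, t)) η =
      (∂^{fun _ : Fin n => ((0 : E), (1 : ℝ))} f) (x, η) := by
  simpa using congrFun (iteratedDeriv_schwartz_comp_add_smul n f (x, 0) (0, 1)) η

end LineDerivative

section CompLinear

variable [RCLike 𝕜] [NormedSpace 𝕜 F]

lemma seminorm_compCLMOfContinuousLinearEquiv_le (e : D ≃L[ℝ] E) (f : 𝓢(E, F)) (k n : ℕ) :
    SchwartzMap.seminorm 𝕜 k n (compCLMOfContinuousLinearEquiv 𝕜 e f) ≤
      ‖(e.symm : E →L[ℝ] D)‖ ^ k * ‖(e : D →L[ℝ] E)‖ ^ n * SchwartzMap.seminorm 𝕜 k n f := by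
  refine seminorm_le_bound 𝕜 k n _ (by positivity) fun x => ?_
  have hx : ‖x‖ ≤ ‖(e.symm : E →L[ℝ] D)‖ * ‖e x‖ := by
    simpa using (e.symm : E →L[ℝ] D).le_opNorm (e x)
  have hderiv : ‖iteratedFDeriv ℝ n (f ∘ e) x‖ ≤
      ‖iteratedFDeriv ℝ n f (e x)‖ * ‖(e : D →L[ℝ] E)‖ ^ n := by
    have hcomp := (e : D →L[ℝ] E).iteratedFDeriv_comp_right (f.smooth n) x le_rfl
    rw [ContinuousLinearEquiv.coe_coe] at hcomp
    rw [hcomp]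
    simpa using (iteratedFDeriv ℝ n f (e x)).norm_compContinuousLinearMap_le
      fun _ => (e : D →L[ℝ] E)
  calc ‖x‖ ^ k * ‖iteratedFDeriv ℝ n (f ∘ e) x‖
      ≤ (‖(e.symm : E →L[ℝ] D)‖ * ‖e x‖) ^ k *
          (‖iteratedFDeriv ℝ n f (e x)‖ * ‖(e : D →L[ℝ] E)‖ ^ n) := by gcongr
    _ = ‖(e.symm : E →L[ℝ] D)‖ ^ k * ‖(e : D →L[ℝ] E)‖ ^ n *
          (‖e x‖ ^ k * ‖iteratedFDeriv ℝ n f (e x)‖) := by ring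
    _ ≤ _ := by gcongr; exact le_seminorm 𝕜 k n f (e x)

lemma isVonNBounded_iUnion_image_compCLMOfContinuousLinearEquiv {ι : Type*} {e : ι → D ≃L[ℝ] E}
    {A B : ℝ} (he : ∀ i, ‖(e i : D →L[ℝ] E)‖ ≤ A) (he_symm : ∀ i, ‖((e i).symm : E →L[ℝ] D)‖ ≤ B)
    {S : Set 𝓢(E, F)} (hS : IsVonNBounded 𝕜 S) :
    IsVonNBounded 𝕜 (⋃ i, compCLMOfContinuousLinearEquiv 𝕜 (e i) '' S) := by
  rw [(schwartz_withSeminorms 𝕜 E F).isVonNBounded_iff_seminorm_bddAbove] at hS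
  rw [(schwartz_withSeminorms 𝕜 D F).isVonNBounded_iff_seminorm_bddAbove]
  rintro ⟨k, n⟩
  obtain ⟨r, hr⟩ := hS (k, n)
  refine ⟨B ^ k * A ^ n * r, ?_⟩
  rintro _ ⟨_, hg, rfl⟩
  obtain ⟨i, f, hf, rfl⟩ := Set.mem_iUnion.1 hg
  have hA : 0 ≤ A := (norm_nonneg _).trans (he i)
  have hB : 0 ≤ B := (norm_nonneg _).trans (he_symm i)
  calc SchwartzMap.seminorm 𝕜 k n (compCLMOfContinuousLinearEquiv 𝕜 (e i) f)
      ≤ ‖((e i).symm : E →L[ℝ] D)‖ ^ k * ‖(e i : D →L[ℝ] E)‖ ^ n * SchwartzMap.seminorm 𝕜 k n f :=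
        seminorm_compCLMOfContinuousLinearEquiv_le (e i) f k n
    _ ≤ B ^ k * A ^ n * r := by
        gcongr
        exacts [he_symm i, he i, hr (Set.mem_image_of_mem _ hf)]

end CompLinear

section Lp

open scoped ENNReal

variable [MeasurableSpace E] [OpensMeasurableSpace E] [SecondCountableTopologyEither E F]
  (μ : Measure E) [μ.HasTemperateGrowth]

lemma exists_norm_toLp_le_of_isVonNBounded [RCLike 𝕜] [NormedSpace 𝕜 F] (p : ℝ≥0∞) [Fact (1 ≤ p)]
    {S : Set 𝓢(E, F)} (hS : IsVonNBounded 𝕜 S) : ∃ C : ℝ, ∀ f ∈ S, ‖f.toLp p μ‖ ≤ C := by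
  have hbdd := hS.image (toLpCLM 𝕜 F p μ)
  rw [NormedSpace.isVonNBounded_iff, isBounded_iff_forall_norm_le] at hbdd
  simpa using hbdd

lemma sqrt_integral_norm_sq_eq_norm_toLp (f : 𝓢(E, F)) :
    √(∫ x, ‖f x‖ ^ 2 ∂μ) = ‖f.toLp 2 μ‖ := by
  rw [norm_toLp' (by simp) (by simp), Real.sqrt_eq_rpow]
  simp

end Lp

end Schwartz

section Flow

lemma gh_neg_gh (t : ℝ) (z : ℝ × ℝ) : gh (-t) (gh t z) = z := by
  have hsq := Real.sin_sq_add_cos_sq t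
  simp only [gh, Real.cos_neg, Real.sin_neg]
  ext
  · linear_combination z.1 * hsq
  · linear_combination z.2 * hsq

/-- The harmonic flow `gh t` as a continuous linear automorphism of the phase plane. -/
noncomputable def ghCLE (t : ℝ) : (ℝ × ℝ) ≃L[ℝ] (ℝ × ℝ) where
  toFun := gh t
  invFun := gh (-t)
  left_inv := gh_neg_gh t
  right_inv z := by simpa using gh_neg_gh (-t) z
  map_add' z w := by ext <;> simp only [gh, Prod.fst_add, Prod.snd_add] <;> ring
  map_smul' c z := by
    ext <;> simp only [gh, Prod.smul_fst, Prod.smul_snd, smul_eq_mul, RingHom.id_apply] <;> ring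
  continuous_toFun := by unfold gh; fun_prop
  continuous_invFun := by unfold gh; fun_prop

lemma coe_ghCLE (t : ℝ) : ⇑(ghCLE t) = gh t := rfl

lemma ghCLE_symm (t : ℝ) : (ghCLE t).symm = ghCLE (-t) := by
  ext1; rfl

lemma norm_gh_le (t : ℝ) (z : ℝ × ℝ) : ‖gh t z‖ ≤ 2 * ‖z‖ := by
  have norm_mul_le_of_abs_le_one {a b : ℝ} (ha : |a| ≤ 1) (hb : ‖b‖ ≤ ‖z‖) : ‖b * a‖ ≤ ‖z‖ := by
    rw [norm_mul]
    exact (mul_le_of_le_one_right (norm_nonneg b) ha).trans hb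
  refine norm_prod_le_iff.2 ⟨?_, ?_⟩
  · calc ‖z.1 * Real.cos t + z.2 * Real.sin t‖
        ≤ ‖z‖ + ‖z‖ := norm_add_le_of_le
          (norm_mul_le_of_abs_le_one (Real.abs_cos_le_one t) (norm_fst_le z))
          (norm_mul_le_of_abs_le_one (Real.abs_sin_le_one t) (norm_snd_le z))
      _ = 2 * ‖z‖ := (two_mul _).symm
  · calc ‖z.2 * Real.cos t - z.1 * Real.sin t‖
        ≤ ‖z‖ + ‖z‖ := norm_sub_le_of_le
          (norm_mul_le_of_abs_le_one (Real.abs_cos_le_one t) (norm_snd_le z))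
          (norm_mul_le_of_abs_le_one (Real.abs_sin_le_one t) (norm_fst_le z))
      _ = 2 * ‖z‖ := (two_mul _).symm

lemma norm_ghCLE_le (t : ℝ) : ‖(ghCLE t : (ℝ × ℝ) →L[ℝ] (ℝ × ℝ))‖ ≤ 2 :=
  ContinuousLinearMap.opNorm_le_bound _ zero_le_two (norm_gh_le t)

end Flow

section Correction

open SchwartzMap LineDeriv Bornology

/-- The correction operator `B_ν` as a continuous linear operator on Schwartz space; it agrees with
`Bop` on Schwartz functions. -/
noncomputable def BopCLM (V : ℝ → ℝ) (ν : ℕ) : 𝓢(ℝ × ℝ, ℂ) →L[ℂ] 𝓢(ℝ × ℝ, ℂ) :=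
  -((iteratedDeriv (ν + 2) V 0 : ℝ) : ℂ) •
    ∑ j ∈ Finset.range ((ν - 1) / 2 + 2),
      ((Complex.I / 2) ^ (2 * j) *
        ((1 : ℂ) / ((((2 * j + 1).factorial * (ν + 1 - 2 * j).factorial : ℕ) : ℝ) : ℂ))) •
      (smulLeftCLM ℂ (fun p : ℝ × ℝ => (p.1 : ℂ) ^ (ν + 1 - 2 * j)) ∘L
        iteratedLineDerivOpCLM ℂ 𝓢(ℝ × ℝ, ℂ) fun _ : Fin (2 * j + 1) => ((0 : ℝ), (1 : ℝ)))

lemma hasTemperateGrowth_ofReal_fst_pow (k : ℕ) :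
    Function.HasTemperateGrowth fun p : ℝ × ℝ => (p.1 : ℂ) ^ k :=
  (Complex.ofRealCLM ∘L ContinuousLinearMap.fst ℝ ℝ ℝ).hasTemperateGrowth.pow k

lemma coe_BopCLM_apply (V : ℝ → ℝ) (ν : ℕ) (f : 𝓢(ℝ × ℝ, ℂ)) : ⇑(BopCLM V ν f) = Bop V ν f := by
  funext p
  simp only [BopCLM, Bop, _root_.smul_apply, _root_.sum_apply, ContinuousLinearMap.comp_apply,
    iteratedLineDerivOpCLM_apply, smulLeftCLM_apply_apply (hasTemperateGrowth_ofReal_fst_pow _),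
    iteratedDeriv_schwartz_prodMk, smul_eq_mul, mul_assoc]

/-- The iterated correction operator `f ↦ B_{ν₁}[B_{ν₂}[⋯] ∘ gh (-s₁)]` as a continuous linear
operator on Schwartz space; it agrees with `iterB` on Schwartz functions. -/
noncomputable def iterBCLM (V : ℝ → ℝ) : List (ℕ × ℝ) → 𝓢(ℝ × ℝ, ℂ) →L[ℂ] 𝓢(ℝ × ℝ, ℂ)
  | [] => ContinuousLinearMap.id ℂ 𝓢(ℝ × ℝ, ℂ)
  | (ν, s) :: l => BopCLM V ν ∘L compCLMOfContinuousLinearEquiv ℂ (ghCLE (-s)) ∘L iterBCLM V l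

lemma coe_iterBCLM_apply (V : ℝ → ℝ) (l : List (ℕ × ℝ)) (f : 𝓢(ℝ × ℝ, ℂ)) :
    ⇑(iterBCLM V l f) = iterB V l f := by
  induction l with
  | nil => rfl
  | cons head l ih =>
    simp only [iterBCLM, iterB, ContinuousLinearMap.comp_apply, coe_BopCLM_apply,
      compCLMOfContinuousLinearEquiv_apply, ih, coe_ghCLE, Function.comp_def]

lemma isVonNBounded_iUnion_image_comp_ghCLE {S : Set 𝓢(ℝ × ℝ, ℂ)} (hS : IsVonNBounded ℂ S) :
    IsVonNBounded ℂ (⋃ t, compCLMOfContinuousLinearEquiv ℂ (ghCLE t) '' S) :=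
  isVonNBounded_iUnion_image_compCLMOfContinuousLinearEquiv norm_ghCLE_le
    (fun t => ghCLE_symm t ▸ norm_ghCLE_le (-t)) hS

lemma isVonNBounded_iUnion_image_iterBCLM (V : ℝ → ℝ) (νs : List ℕ) {S : Set 𝓢(ℝ × ℝ, ℂ)}
    (hS : IsVonNBounded ℂ S) :
    IsVonNBounded ℂ (⋃ (l) (_ : l.map Prod.fst = νs), iterBCLM V l '' S) := by
  induction νs with
  | nil => simpa [iterBCLM] using hS
  | cons ν νs ih =>
    refine ((isVonNBounded_iUnion_image_comp_ghCLE ih).image (BopCLM V ν)).subset ?_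
    simp only [Set.iUnion_subset_iff, Set.image_subset_iff]
    rintro (_ | ⟨⟨ν', s⟩, l⟩) hl f hf
    · simp at hl
    · obtain ⟨rfl, htail⟩ := List.cons.inj hl
      refine Set.mem_image_of_mem _ (Set.mem_iUnion_of_mem (-s) (Set.mem_image_of_mem _ ?_))
      exact Set.mem_iUnion₂_of_mem htail (Set.mem_image_of_mem _ hf)

end Correction

theorem iterated_Bop_L2_bound_general (V : ℝ → ℝ) (νs : List ℕ) (f : SchwartzMap (ℝ × ℝ) ℂ) :
    ∃ C : ℝ, ∀ ss : List ℝ, ss.length = νs.length →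
      Real.sqrt (∫ p : ℝ × ℝ, ‖iterB V (νs.zip ss) (⇑f) p‖ ^ 2) ≤ C := by
  have hbdd := isVonNBounded_iUnion_image_iterBCLM V νs (Bornology.isVonNBounded_singleton f)
  obtain ⟨C, hC⟩ := exists_norm_toLp_le_of_isVonNBounded volume 2 hbdd
  refine ⟨C, fun ss hss => ?_⟩
  rw [← coe_iterBCLM_apply, sqrt_integral_norm_sq_eq_norm_toLp]
  exact hC _ (Set.mem_iUnion₂_of_mem (List.map_fst_zip hss.ge) (Set.mem_image_of_mem _ rfl))

/-- Uniform-in-time `L²` bound for iterated correction operators applied to a Schwartz function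
along the harmonic flow. -/
theorem iterated_Bop_L2_bound (V : ℝ → ℝ) (hV : ContDiff ℝ (⊤ : ℕ∞) V) (hV0 : V 0 = 0)
    (hV1 : deriv V 0 = 0) (hV2 : iteratedDeriv 2 V 0 = 1)
    (νs : List ℕ) (hne : νs ≠ []) (hν : ∀ ν ∈ νs, 1 ≤ ν)
    (f : SchwartzMap (ℝ × ℝ) ℂ) :
    ∃ C : ℝ, ∀ ss : List ℝ, ss.length = νs.length →
      Real.sqrt (∫ p : ℝ × ℝ, ‖iterB V (νs.zip ss) (⇑f) p‖ ^ 2) ≤ C :=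
  iterated_Bop_L2_bound_general V νs f
end
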